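/- For all integers r,q ≥ 1, let pos₁^{rq}(L,j,k) and pos₀^{rq}(L,j,k) denote the axis and meander positions assigned to the label L^j_k for the parameter pair (r,q), and define pos₁^{qr}, pos₀^{qr} by the same formulas with r and q interchanged (so the first index ranges over 0,…,q and the second over 0,…,r). Then for every tag L ∈ {A,B} and all 0 ≤ j ≤ r, 0 ≤ k ≤ q with (L,j,k) ≠ (A,0,0): pos₁^{qr}(L,k,j) = N+1 − pos₀^{rq}(L,j,k) and pos₀^{qr}(L,k,j) = N+1 − pos₁^{rq}(L,j,k). -/

import Mathlib

/-- Morse numbers `i_j` of a permutation `σ` of `{1,…,N}` (extended to `ℕ`),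
via the recursion `i_1 = 0`,
`i_{j+1} = i_j + (-1)^(j+1) * sign (σ⁻¹(j+1) - σ⁻¹(j))`. -/
def morse (σ : Equiv.Perm ℕ) : ℕ → ℤ
  | 0 => 0
  | 1 => 0
  | (j+2) => morse σ (j+1) +
      (-1)^(j+2) * Int.sign ((σ.symm (j+2) : ℤ) - (σ.symm (j+1) : ℤ))

/-- Zero numbers `z_{j k}`, recursion in the first index `j`, second index `k` fixed:
`z_{1k} = 0`, `z_{kk} = i_k`, `z_{k+1,k} = min (i_k, i_{k+1})`, and otherwise
`z_{j+1,k} = z_{jk} + ((-1)^(j+1)/2) * (sign (σ⁻¹(j+1) - σ⁻¹(k)) - sign (σ⁻¹(j) - σ⁻¹(k)))`. -/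
def zrec (σ : Equiv.Perm ℕ) (k : ℕ) : ℕ → ℤ
  | 0 => 0
  | 1 => 0
  | (j+2) =>
      if j+2 = k then morse σ k
      else if j+1 = k then min (morse σ k) (morse σ (k+1))
      else zrec σ k (j+1) +
        ((-1)^(j+2) * (Int.sign ((σ.symm (j+2) : ℤ) - (σ.symm k : ℤ))
          - Int.sign ((σ.symm (j+1) : ℤ) - (σ.symm k : ℤ)))) / 2

/-- The zero number `z_{m n}`. -/
def zfun (σ : Equiv.Perm ℕ) (m n : ℕ) : ℤ := zrec σ n m

/-- The connection digraph of a dissipative Morse permutation `σ` of `{1,…,N}`: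
an edge `m ⤳ n` iff `i_m = i_n + 1` and no `w` strictly between `m` and `n`
blocks, i.e. satisfies `z_{mw} = z_{wn} = z_{mn}`. -/
def hasEdge (N : ℕ) (σ : Equiv.Perm ℕ) (m n : ℕ) : Prop :=
  1 ≤ m ∧ m ≤ N ∧ 1 ≤ n ∧ n ≤ N ∧
  morse σ m = morse σ n + 1 ∧
  ¬ ∃ w : ℕ, min m n < w ∧ w < max m n ∧
      zfun σ m w = zfun σ w n ∧ zfun σ w n = zfun σ m n

/-- A dissipative permutation of `{1,…,N}`. -/
def Dissipative (N : ℕ) (σ : Equiv.Perm ℕ) : Prop :=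
  Set.BijOn σ (Set.Icc 1 N) (Set.Icc 1 N) ∧ σ 1 = 1 ∧ σ N = N

/-- The Morse property: all Morse numbers are nonnegative. -/
def MorseProp (N : ℕ) (σ : Equiv.Perm ℕ) : Prop :=
  ∀ j, 1 ≤ j → j ≤ N → 0 ≤ morse σ j

/-- Morse counts `μ(i) = #{j ∈ {1,…,N} : i_j = i}`. -/
def morseCount (N : ℕ) (σ : Equiv.Perm ℕ) (i : ℤ) : ℕ :=
  ((Finset.Icc 1 N).filter (fun j => morse σ j = i)).card

/-- The primitive 3-nose permutation `σ_{rq}` of `{1,…,N}`, `N = 2(r+1)(q+1)-1`,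
characterized by its defining relations, extended to a permutation of `ℕ`
fixing everything outside `{1,…,N}`. -/
def SigmaRQ (r q : ℕ) (σ : Equiv.Perm ℕ) : Prop :=
  (∀ a, a ∉ Set.Icc 1 (2*(r+1)*(q+1) - 1) → σ a = a) ∧
  (∀ j k, j ≤ r → k ≤ q →
    σ (2*((q+1)*j+k)+1) = 2*(j+(r+1)*k)+1) ∧
  (∀ j k, j ≤ r → k ≤ q → ¬(j = 0 ∧ k = 0) →
    σ (2*((q+1)*(r-j)+(q-k)+1)) = 2*(j+(r+1)*k))

/-- Tags `A`, `B` of equilibrium labels `A^j_k`, `B^j_k`. -/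
inductive Tag | A | B
deriving DecidableEq

/-- The axis position (`h_1`-position) of the label `L^j_k` for parameters `(r,q)`. -/
def axisPos (r q : ℕ) : Tag → ℕ → ℕ → ℕ
  | Tag.A, j, k => if Odd j then (q+1)*(j-1)+k+1 else (q+1)*(2*r+1-j)+(q-k)+1
  | Tag.B, j, k => if Odd j then (q+1)*j+(q-k)+1 else (q+1)*(2*r-j)+k+1

/-- The meander position (`h_0`-position) of the label `L^j_k` for parameters `(r,q)`. -/
def meanderPos (r q : ℕ) : Tag → ℕ → ℕ → ℕ
  | Tag.A, j, k => if Odd k then (r+1)*(2*q+1-k)+(2*r+1-j) else (r+1)*k+j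
  | Tag.B, j, k => if Odd k then (r+1)*(2*q+1-k)+j else (r+1)*(k+1)+(r-j)

/-- The suspension `σ̃` of a dissipative permutation `σ` of `{1,…,N}`:
`σ̃(1) = 1`, `σ̃(N+2) = N+2`, and `σ̃(a+1) = N+2 - σ(a)` for `1 ≤ a ≤ N`. -/
def IsSuspension (N : ℕ) (σ σt : Equiv.Perm ℕ) : Prop :=
  σt 1 = 1 ∧ σt (N+2) = N+2 ∧ ∀ a, 1 ≤ a → a ≤ N → σt (a+1) = N+2 - σ a

/-- The label `A^0_0` is the distinguished (formal) vertex `⋆`. -/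
def IsStar (L : Tag) (j k : ℕ) : Prop := L = Tag.A ∧ j = 0 ∧ k = 0

/-- Tag swap `A ↔ B`, used by the reversor. -/
def tagSwap : Tag → Tag
  | Tag.A => Tag.B
  | Tag.B => Tag.A

/-!
The meander positions, counted from the formal position `0` of `A^0_0`, fill `2(q+1)` consecutive
blocks of length `r+1`, so a position is a block index together with an offset. Up to a shift by
one, the axis position of `L^k_j` for `(q,r)` arises from the meander position of `L^j_k` for
`(r,q)` by reversing both the order of the blocks and the offsets inside each block.
-/

theorem block_add_block_eq_mul {R : Type*} [NonUnitalNonAssocSemiring R] {m b c u v t n : R}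
    (blocks : b + c + t = n) (offsets : u + v = m * t) :
    (m * b + u) + (m * c + v) = m * n := by
  rw [← blocks, mul_add, mul_add, ← offsets, add_add_add_comm]

theorem axisPos_swap_add_meanderPos {r q j k : ℕ} (L : Tag) (hj : j ≤ r) (hk : k ≤ 2 * q + 1) :
    axisPos q r L k j + meanderPos r q L j k = 2 * (r + 1) * (q + 1) := by
  rw [mul_comm 2, mul_assoc]
  rcases Nat.even_or_odd k with heven | hodd
  · have hnotodd : ¬Odd k := Nat.not_odd_iff_even.mpr heven
    cases L with
    | A =>
      simp only [axisPos, meanderPos, if_neg hnotodd, add_assoc _ _ 1]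
      exact block_add_block_eq_mul (t := 1) (by omega) (by omega)
    | B =>
      have hk_even : k ≤ 2 * q := by grind
      simp only [axisPos, meanderPos, if_neg hnotodd, add_assoc _ _ 1]
      exact block_add_block_eq_mul (t := 1) (by omega) (by omega)
  · cases L with
    | A =>
      have hpos : 1 ≤ k := hodd.pos
      simp only [axisPos, meanderPos, if_pos hodd, add_assoc _ _ 1]
      -- The offset `2r+1-j` of the meander position runs into the next block, so `t = 2`.
      exact block_add_block_eq_mul (t := 2) (by omega) (by omega)
    | B =>
      simp only [axisPos, meanderPos, if_pos hodd, add_assoc _ _ 1]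
      exact block_add_block_eq_mul (t := 1) (by omega) (by omega)

/-- the intertwining relation `Λ ∘ h^{qr}_ι = h^{rq}_{1-ι} ∘ κ`:
`pos₁^{qr}(L,k,j) = N+1 - pos₀^{rq}(L,j,k)` and
`pos₀^{qr}(L,k,j) = N+1 - pos₁^{rq}(L,j,k)`. -/
theorem stmt_7 (r q : ℕ) (hr : 1 ≤ r) (hq : 1 ≤ q) :
    ∀ (L : Tag) (j k : ℕ), j ≤ r → k ≤ q → ¬(L = Tag.A ∧ j = 0 ∧ k = 0) →
      axisPos q r L k j = 2*(r+1)*(q+1) - meanderPos r q L j k ∧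
      meanderPos q r L k j = 2*(r+1)*(q+1) - axisPos r q L j k := by
  intro L j k hj hk _
  have hmeander : axisPos q r L k j + meanderPos r q L j k = 2 * (r + 1) * (q + 1) :=
    axisPos_swap_add_meanderPos L hj (by omega)
  have haxis : axisPos r q L j k + meanderPos q r L k j = 2 * (r + 1) * (q + 1) := by
    rw [mul_right_comm]
    exact axisPos_swap_add_meanderPos L hk (by omega)
  exact ⟨Nat.eq_sub_of_add_eq hmeander, Nat.eq_sub_of_add_eq' haxis⟩
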